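/- Let n ≥ 1 and let u, v ∈ ℝ^{2n} be vectors with ω(u, v) > 0. Then there exists γ ∈ Sp(2n, ℤ) such that ω_j(γu, γv) ≠ 0 for every j = 1, …, n. -/

import Mathlib

def idx1 (n : ℕ) (j : Fin n) : Fin (2 * n) :=
  ⟨2 * j.val, by have := j.isLt; omega⟩

def idx2 (n : ℕ) (j : Fin n) : Fin (2 * n) :=
  ⟨2 * j.val + 1, by have := j.isLt; omega⟩

def omegaJ {R : Type*} [CommRing R] (n : ℕ) (j : Fin n) (u v : Fin (2 * n) → R) : R :=
  u (idx1 n j) * v (idx2 n j) - u (idx2 n j) * v (idx1 n j)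

def omegaForm {R : Type*} [CommRing R] (n : ℕ) (u v : Fin (2 * n) → R) : R :=
  ∑ j : Fin n, omegaJ n j u v

def IsSymplectic {R : Type*} [CommRing R] (n : ℕ)
    (g : Matrix (Fin (2 * n)) (Fin (2 * n)) R) : Prop :=
  ∀ x y : Fin (2 * n) → R, omegaForm n (g.mulVec x) (g.mulVec y) = omegaForm n x y

/-!
The transvection `x ↦ x + t ω(x, z) z` with integral `z = a + b`, where `a` lives in block `i` and
`b` in block `k`, leaves every other block alone, raises `ω_k(u, v)` by `t D` and lowers `ω_i(u, v)`
by the same amount, where `D = ω_k(u, b) ω_i(v, a) - ω_k(v, b) ω_i(u, a)`. Suppose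
`ω_i(u, v) ≠ 0 = ω_k(u, v)`. The `i`-th blocks of `u` and `v` are independent, so `D ≠ 0` for some
`a, b` as soon as `u` or `v` has a nonzero `k`-th block, and one of `t = ±1` keeps block `i`
nonzero. If both `k`-th blocks vanish then `D = 0`, but such a transvection makes the `k`-th block
of `u` nonzero without changing any `ω_j(u, v)`. Since `ω(u, v) ≠ 0` is invariant, a nonzero block
`i` is always available, and the number of zero blocks can be driven down to `0`.
-/

open Matrix

variable {R S : Type*} [CommRing R] [CommRing S] {n : ℕ}

section Form

theorem omegaJ_map (f : R →+* S) (j : Fin n) (u v : Fin (2 * n) → R) :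
    omegaJ n j (f ∘ u) (f ∘ v) = f (omegaJ n j u v) := by
  simp [omegaJ]

theorem omegaForm_map (f : R →+* S) (u v : Fin (2 * n) → R) :
    omegaForm n (f ∘ u) (f ∘ v) = f (omegaForm n u v) := by
  simp only [omegaForm, omegaJ_map, map_sum]

theorem omegaJ_self (j : Fin n) (x : Fin (2 * n) → R) : omegaJ n j x x = 0 := by
  rw [omegaJ, mul_comm, sub_self]

theorem omegaJ_swap (j : Fin n) (x y : Fin (2 * n) → R) : omegaJ n j y x = -omegaJ n j x y := by
  simp only [omegaJ]
  ring

theorem omegaJ_smul_sub_smul_left (j : Fin n) (p q : R) (x y z : Fin (2 * n) → R) :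
    omegaJ n j (p • x - q • y) z = p * omegaJ n j x z - q * omegaJ n j y z := by
  simp only [omegaJ, Pi.sub_apply, Pi.smul_apply, smul_eq_mul]
  ring

theorem omegaJ_add_right (j : Fin n) (x y z : Fin (2 * n) → R) :
    omegaJ n j x (y + z) = omegaJ n j x y + omegaJ n j x z := by
  simp only [omegaJ, Pi.add_apply]
  ring

theorem omegaJ_add_smul_add_smul (j : Fin n) (x y z : Fin (2 * n) → R) (a b : R) :
    omegaJ n j (x + a • z) (y + b • z) =
      omegaJ n j x y + (b * omegaJ n j x z - a * omegaJ n j y z) := by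
  simp only [omegaJ, Pi.add_apply, Pi.smul_apply, smul_eq_mul]
  ring

theorem omegaForm_add_smul_add_smul (x y z : Fin (2 * n) → R) (a b : R) :
    omegaForm n (x + a • z) (y + b • z) =
      omegaForm n x y + (b * omegaForm n x z - a * omegaForm n y z) := by
  simp only [omegaForm, omegaJ_add_smul_add_smul, Finset.sum_add_distrib, Finset.sum_sub_distrib,
    Finset.mul_sum]

/-- The standard symplectic form `omegaForm` as a Mathlib bilinear form. -/
def omegaBilin (R : Type*) [CommRing R] (n : ℕ) : LinearMap.BilinForm R (Fin (2 * n) → R) :=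
  LinearMap.mk₂ R (omegaForm n)
    (fun x y z => by
      simp only [omegaForm, omegaJ, Pi.add_apply, ← Finset.sum_add_distrib]
      exact Finset.sum_congr rfl fun _ _ => by ring)
    (fun c x y => by
      simp only [omegaForm, omegaJ, Pi.smul_apply, smul_eq_mul, Finset.mul_sum]
      exact Finset.sum_congr rfl fun _ _ => by ring)
    (fun x y z => by simp only [omegaForm, omegaJ_add_right, Finset.sum_add_distrib])
    (fun c x y => by
      simp only [omegaForm, omegaJ, Pi.smul_apply, smul_eq_mul, Finset.mul_sum]
      exact Finset.sum_congr rfl fun _ _ => by ring)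

@[simp]
theorem omegaBilin_apply (x y : Fin (2 * n) → R) : omegaBilin R n x y = omegaForm n x y :=
  rfl

theorem comp_single_one {ι : Type*} [DecidableEq ι] (f : R →+* S) (r : ι) :
    f ∘ (Pi.single r 1 : ι → R) = Pi.single r 1 := by
  ext s
  simp [Pi.single_apply, apply_ite f]

theorem toMatrix'_omegaBilin_map (f : R →+* S) :
    (omegaBilin R n).toMatrix'.map f = (omegaBilin S n).toMatrix' := by
  ext r s
  simp only [map_apply, LinearMap.BilinForm.toMatrix'_apply, omegaBilin_apply, ← omegaForm_map,
    comp_single_one]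

end Form

section IsSymplectic

variable {g h : Matrix (Fin (2 * n)) (Fin (2 * n)) R}

theorem isSymplectic_iff_transpose_mul_mul :
    IsSymplectic n g ↔
      gᵀ * (omegaBilin R n).toMatrix' * g = (omegaBilin R n).toMatrix' := by
  have comp_eq : gᵀ * (omegaBilin R n).toMatrix' * g =
      ((omegaBilin R n).comp g.toLin' g.toLin').toMatrix' := by
    rw [LinearMap.BilinForm.toMatrix'_comp, LinearMap.toMatrix'_toLin']
  rw [comp_eq, EmbeddingLike.apply_eq_iff_eq]
  exact ⟨fun hg => LinearMap.ext₂ hg, fun hg => LinearMap.congr_fun₂ hg⟩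

namespace IsSymplectic

theorem one : IsSymplectic n (1 : Matrix (Fin (2 * n)) (Fin (2 * n)) R) := fun x y => by
  simp only [one_mulVec]

theorem mul (hg : IsSymplectic n g) (hh : IsSymplectic n h) : IsSymplectic n (g * h) :=
  fun x y => by rw [← mulVec_mulVec, ← mulVec_mulVec, hg, hh]

theorem map (hg : IsSymplectic n g) (f : R →+* S) : IsSymplectic n (g.map f) := by
  rw [isSymplectic_iff_transpose_mul_mul] at hg ⊢
  rw [← toMatrix'_omegaBilin_map f, ← transpose_map, ← Matrix.map_mul, ← Matrix.map_mul, hg]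

end IsSymplectic

end IsSymplectic

section Transvection

/-- The matrix of the symplectic transvection `x ↦ x + t ω(x, z) z`. -/
def symplecticTransvection (t : R) (z : Fin (2 * n) → R) :
    Matrix (Fin (2 * n)) (Fin (2 * n)) R :=
  (LinearMap.transvection (t • (omegaBilin R n).flip z) z).toMatrix'

theorem symplecticTransvection_mulVec (t : R) (z x : Fin (2 * n) → R) :
    symplecticTransvection t z *ᵥ x = x + (t * omegaForm n x z) • z := by
  rw [symplecticTransvection, LinearMap.toMatrix'_mulVec, LinearMap.transvection.apply]
  rfl

theorem isSymplectic_symplecticTransvection (t : R) (z : Fin (2 * n) → R) :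
    IsSymplectic n (symplecticTransvection t z) := fun x y => by
  rw [symplecticTransvection_mulVec, symplecticTransvection_mulVec, omegaForm_add_smul_add_smul]
  ring

theorem symplecticTransvection_map (f : R →+* S) (t : R) (z : Fin (2 * n) → R) :
    (symplecticTransvection t z).map f = symplecticTransvection (f t) (f ∘ z) := by
  ext r s
  simp only [map_apply, symplecticTransvection, LinearMap.toMatrix'_apply,
    LinearMap.transvection.apply, LinearMap.smul_apply, LinearMap.BilinForm.flip_apply,
    omegaBilin_apply, Pi.add_apply, Pi.smul_apply, smul_eq_mul, map_add, map_mul, ← omegaForm_map,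
    ← comp_single_one f, Function.comp_apply]

theorem omegaJ_symplecticTransvection_mulVec (j : Fin n) (t : R) (z x y : Fin (2 * n) → R) :
    omegaJ n j (symplecticTransvection t z *ᵥ x) (symplecticTransvection t z *ᵥ y) =
      omegaJ n j x y +
        t * (omegaForm n y z * omegaJ n j x z - omegaForm n x z * omegaJ n j y z) := by
  rw [symplecticTransvection_mulVec, symplecticTransvection_mulVec, omegaJ_add_smul_add_smul]
  ring

end Transvection

section Blocks

theorem idx1_inj {i j : Fin n} : idx1 n i = idx1 n j ↔ i = j := by
  simp [idx1, Fin.ext_iff]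

theorem idx2_inj {i j : Fin n} : idx2 n i = idx2 n j ↔ i = j := by
  simp [idx2, Fin.ext_iff]

theorem idx1_ne_idx2 (i j : Fin n) : idx1 n i ≠ idx2 n j := by
  simp only [idx1, idx2, ne_eq, Fin.ext_iff]
  omega

theorem omegaJ_single_idx1 (j : Fin n) (x : Fin (2 * n) → R) :
    omegaJ n j x (Pi.single (idx1 n j) 1) = -x (idx2 n j) := by
  simp [omegaJ, (idx1_ne_idx2 j j).symm]

theorem omegaJ_single_idx2 (j : Fin n) (x : Fin (2 * n) → R) :
    omegaJ n j x (Pi.single (idx2 n j) 1) = x (idx1 n j) := by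
  simp [omegaJ, idx1_ne_idx2 j j]

/-- The vector `z` lies in the `j`-th symplectic plane: its coordinates in all other blocks
vanish. -/
def SupportedOnBlock (j : Fin n) (z : Fin (2 * n) → R) : Prop :=
  ∀ l ≠ j, z (idx1 n l) = 0 ∧ z (idx2 n l) = 0

theorem supportedOnBlock_single_idx1 (j : Fin n) :
    SupportedOnBlock j (Pi.single (idx1 n j) 1 : Fin (2 * n) → R) := fun l hl => by
  simp [idx1_inj, hl, (idx1_ne_idx2 j l).symm]

theorem supportedOnBlock_single_idx2 (j : Fin n) :
    SupportedOnBlock j (Pi.single (idx2 n j) 1 : Fin (2 * n) → R) := fun l hl => by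
  simp [idx2_inj, hl, idx1_ne_idx2 l j]

namespace SupportedOnBlock

variable {i k : Fin n} {a b : Fin (2 * n) → R}

theorem map (ha : SupportedOnBlock i a) (f : R →+* S) : SupportedOnBlock i (f ∘ a) :=
  fun l hl => by simp [ha l hl]

theorem omegaJ_eq_zero (ha : SupportedOnBlock i a) {l : Fin n} (hl : l ≠ i)
    (x : Fin (2 * n) → R) : omegaJ n l x a = 0 := by
  simp [omegaJ, ha l hl]

theorem omegaForm_eq (ha : SupportedOnBlock i a) (x : Fin (2 * n) → R) :
    omegaForm n x a = omegaJ n i x a :=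
  Fintype.sum_eq_single i fun _ hl => ha.omegaJ_eq_zero hl x

end SupportedOnBlock

theorem exists_supportedOnBlock_omegaJ_ne_zero {j : Fin n} {x y : Fin (2 * n) → R}
    (hxy : omegaJ n j x y ≠ 0) :
    ∃ a : Fin (2 * n) → ℤ, SupportedOnBlock j a ∧
      omegaJ n j x (Int.castRingHom R ∘ a) ≠ 0 := by
  by_cases hx : x (idx1 n j) = 0
  · refine ⟨_, supportedOnBlock_single_idx1 j, ?_⟩
    rw [comp_single_one, omegaJ_single_idx1, neg_ne_zero]
    intro hx'
    exact hxy (by simp [omegaJ, hx, hx'])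
  · refine ⟨_, supportedOnBlock_single_idx2 j, ?_⟩
    rwa [comp_single_one, omegaJ_single_idx2]

end Blocks

section BlockTransfer

/-- The amount by which the transvection along `a + b`, with `a` in block `i` and `b` in block `k`,
raises `ω_k(u, v)` at the expense of `ω_i(u, v)`. -/
def blockTransfer (i k : Fin n) (a b u v : Fin (2 * n) → R) : R :=
  omegaJ n k u b * omegaJ n i v a - omegaJ n k v b * omegaJ n i u a

variable {i k : Fin n} {a b : Fin (2 * n) → R}

theorem omegaForm_add_of_supportedOnBlock (ha : SupportedOnBlock i a) (hb : SupportedOnBlock k b)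
    (x : Fin (2 * n) → R) : omegaForm n x (a + b) = omegaJ n i x a + omegaJ n k x b := by
  rw [← ha.omegaForm_eq, ← hb.omegaForm_eq, ← omegaBilin_apply, map_add, omegaBilin_apply,
    omegaBilin_apply]

theorem omegaJ_transvection_target (ha : SupportedOnBlock i a) (hb : SupportedOnBlock k b)
    (hik : i ≠ k) (t : R) (u v : Fin (2 * n) → R) :
    omegaJ n k (symplecticTransvection t (a + b) *ᵥ u) (symplecticTransvection t (a + b) *ᵥ v) =
      omegaJ n k u v + t * blockTransfer i k a b u v := by
  simp only [omegaJ_symplecticTransvection_mulVec, omegaForm_add_of_supportedOnBlock ha hb,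
    omegaJ_add_right, ha.omegaJ_eq_zero hik.symm, blockTransfer]
  ring

theorem omegaJ_transvection_source (ha : SupportedOnBlock i a) (hb : SupportedOnBlock k b)
    (hik : i ≠ k) (t : R) (u v : Fin (2 * n) → R) :
    omegaJ n i (symplecticTransvection t (a + b) *ᵥ u) (symplecticTransvection t (a + b) *ᵥ v) =
      omegaJ n i u v - t * blockTransfer i k a b u v := by
  simp only [omegaJ_symplecticTransvection_mulVec, omegaForm_add_of_supportedOnBlock ha hb,
    omegaJ_add_right, hb.omegaJ_eq_zero hik, blockTransfer]
  ring

theorem omegaJ_transvection_of_ne (ha : SupportedOnBlock i a) (hb : SupportedOnBlock k b)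
    {j : Fin n} (hji : j ≠ i) (hjk : j ≠ k) (t : R) (u v : Fin (2 * n) → R) :
    omegaJ n j (symplecticTransvection t (a + b) *ᵥ u) (symplecticTransvection t (a + b) *ᵥ v) =
      omegaJ n j u v := by
  simp only [omegaJ_symplecticTransvection_mulVec, omegaJ_add_right, ha.omegaJ_eq_zero hji,
    hb.omegaJ_eq_zero hjk]
  ring

theorem omegaJ_transvection_of_blockTransfer_eq_zero (ha : SupportedOnBlock i a)
    (hb : SupportedOnBlock k b) (hik : i ≠ k) {u v : Fin (2 * n) → R}
    (huv : blockTransfer i k a b u v = 0) (t : R) (j : Fin n) :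
    omegaJ n j (symplecticTransvection t (a + b) *ᵥ u) (symplecticTransvection t (a + b) *ᵥ v) =
      omegaJ n j u v := by
  obtain rfl | hji := eq_or_ne j i
  · rw [omegaJ_transvection_source ha hb hik, huv, mul_zero, sub_zero]
  obtain rfl | hjk := eq_or_ne j k
  · rw [omegaJ_transvection_target ha hb hik, huv, mul_zero, add_zero]
  · exact omegaJ_transvection_of_ne ha hb hji hjk t u v

variable [NoZeroDivisors R]

theorem exists_blockTransfer_ne_zero {u v c : Fin (2 * n) → R} (hi : omegaJ n i u v ≠ 0)
    (hc : omegaJ n k u c ≠ 0 ∨ omegaJ n k v c ≠ 0) :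
    ∃ a b : Fin (2 * n) → ℤ, SupportedOnBlock i a ∧ SupportedOnBlock k b ∧
      blockTransfer i k (Int.castRingHom R ∘ a) (Int.castRingHom R ∘ b) u v ≠ 0 := by
  obtain ⟨b, hb, hub⟩ : ∃ b : Fin (2 * n) → ℤ, SupportedOnBlock k b ∧
      (omegaJ n k u (Int.castRingHom R ∘ b) ≠ 0 ∨ omegaJ n k v (Int.castRingHom R ∘ b) ≠ 0) := by
    rcases hc with hu | hv
    · exact (exists_supportedOnBlock_omegaJ_ne_zero hu).imp fun _ h => ⟨h.1, .inl h.2⟩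
    · exact (exists_supportedOnBlock_omegaJ_ne_zero hv).imp fun _ h => ⟨h.1, .inr h.2⟩
  set p := omegaJ n k u (Int.castRingHom R ∘ b)
  set q := omegaJ n k v (Int.castRingHom R ∘ b)
  obtain ⟨y, hy⟩ : ∃ y, omegaJ n i (p • v - q • u) y ≠ 0 := by
    rcases hub with hp0 | hq0
    · refine ⟨u, ?_⟩
      rw [omegaJ_smul_sub_smul_left, omegaJ_self, omegaJ_swap i u v, mul_zero, sub_zero]
      exact mul_ne_zero hp0 (neg_ne_zero.mpr hi)
    · refine ⟨v, ?_⟩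
      rw [omegaJ_smul_sub_smul_left, omegaJ_self, mul_zero, zero_sub]
      exact neg_ne_zero.mpr (mul_ne_zero hq0 hi)
  obtain ⟨a, ha, hya⟩ := exists_supportedOnBlock_omegaJ_ne_zero hy
  exact ⟨a, b, ha, hb, by rwa [omegaJ_smul_sub_smul_left] at hya⟩

end BlockTransfer

section IntegralSteps

variable {i k : Fin n} {u v : Fin (2 * n) → R}

theorem symplecticTransvection_add_map_intCast (t : ℤ) (a b : Fin (2 * n) → ℤ) :
    (symplecticTransvection t (a + b)).map (Int.castRingHom R) =
      symplecticTransvection (t : R) (Int.castRingHom R ∘ a + Int.castRingHom R ∘ b) := by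
  have cast_add : Int.castRingHom R ∘ (a + b) = Int.castRingHom R ∘ a + Int.castRingHom R ∘ b :=
    funext fun _ => map_add _ _ _
  rw [symplecticTransvection_map, cast_add, eq_intCast]

theorem exists_isSymplectic_omegaJ_eq_and_block_ne_zero (hi : omegaJ n i u v ≠ 0)
    (hu : ∀ c, omegaJ n k u c = 0) (hv : ∀ c, omegaJ n k v c = 0) :
    ∃ γ : Matrix (Fin (2 * n)) (Fin (2 * n)) ℤ, IsSymplectic n γ ∧
      (∀ j, omegaJ n j (γ.map (Int.castRingHom R) *ᵥ u) (γ.map (Int.castRingHom R) *ᵥ v) =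
        omegaJ n j u v) ∧
      ∃ c, omegaJ n k (γ.map (Int.castRingHom R) *ᵥ u) c ≠ 0 := by
  have hik : i ≠ k := fun h => hi (h ▸ hu v)
  obtain ⟨a, ha, hua⟩ := exists_supportedOnBlock_omegaJ_ne_zero hi
  have hb := supportedOnBlock_single_idx1 (R := ℤ) k
  have haR := ha.map (Int.castRingHom R)
  have hbR := hb.map (Int.castRingHom R)
  refine ⟨_, isSymplectic_symplecticTransvection 1 (a + Pi.single (idx1 n k) 1), ?_,
    Pi.single (idx2 n k) 1, ?_⟩ <;> rw [symplecticTransvection_add_map_intCast]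
  · exact omegaJ_transvection_of_blockTransfer_eq_zero haR hbR hik
      (by simp only [blockTransfer, hu, hv, zero_mul, sub_zero]) _
  · have hu1 : u (idx1 n k) = 0 := (omegaJ_single_idx2 k u).symm.trans (hu _)
    rw [omegaJ_single_idx2, symplecticTransvection_mulVec,
      omegaForm_add_of_supportedOnBlock haR hbR, hu]
    simpa [hu1, ha k hik.symm] using hua

variable [NoZeroDivisors R]

theorem exists_isSymplectic_omegaJ_ne_zero_of_block_ne_zero (h2 : (2 : R) ≠ 0)
    (hi : omegaJ n i u v ≠ 0) (hk : omegaJ n k u v = 0) {c : Fin (2 * n) → R}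
    (hc : omegaJ n k u c ≠ 0 ∨ omegaJ n k v c ≠ 0) :
    ∃ γ : Matrix (Fin (2 * n)) (Fin (2 * n)) ℤ, IsSymplectic n γ ∧
      omegaJ n k (γ.map (Int.castRingHom R) *ᵥ u) (γ.map (Int.castRingHom R) *ᵥ v) ≠ 0 ∧
      ∀ j, omegaJ n j u v ≠ 0 →
        omegaJ n j (γ.map (Int.castRingHom R) *ᵥ u) (γ.map (Int.castRingHom R) *ᵥ v) ≠ 0 := by
  have hik : i ≠ k := fun h => hi (h ▸ hk)
  obtain ⟨a, b, ha, hb, hD⟩ := exists_blockTransfer_ne_zero hi hc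
  have haR := ha.map (Int.castRingHom R)
  have hbR := hb.map (Int.castRingHom R)
  set D := blockTransfer i k (Int.castRingHom R ∘ a) (Int.castRingHom R ∘ b) u v
  obtain ⟨t, htD, ht⟩ : ∃ t : ℤ, t * D ≠ 0 ∧ omegaJ n i u v - t * D ≠ 0 := by
    by_cases hminus : omegaJ n i u v - D = 0
    · refine ⟨-1, by simpa using hD, fun hplus => mul_ne_zero h2 hD ?_⟩
      push_cast at hplus
      linear_combination hplus - hminus
    · exact ⟨1, by simpa using hD, by simpa using hminus⟩
  refine ⟨_, isSymplectic_symplecticTransvection t (a + b), ?_, fun j hj => ?_⟩ <;>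
    rw [symplecticTransvection_add_map_intCast]
  · rwa [omegaJ_transvection_target haR hbR hik, hk, zero_add]
  · have hjk : j ≠ k := fun h => hj (h ▸ hk)
    obtain rfl | hji := eq_or_ne j i
    · rwa [omegaJ_transvection_source haR hbR hik]
    · rwa [omegaJ_transvection_of_ne haR hbR hji hjk]

theorem exists_isSymplectic_omegaJ_ne_zero (h2 : (2 : R) ≠ 0)
    (hi : omegaJ n i u v ≠ 0) (hk : omegaJ n k u v = 0) :
    ∃ γ : Matrix (Fin (2 * n)) (Fin (2 * n)) ℤ, IsSymplectic n γ ∧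
      omegaJ n k (γ.map (Int.castRingHom R) *ᵥ u) (γ.map (Int.castRingHom R) *ᵥ v) ≠ 0 ∧
      ∀ j, omegaJ n j u v ≠ 0 →
        omegaJ n j (γ.map (Int.castRingHom R) *ᵥ u) (γ.map (Int.castRingHom R) *ᵥ v) ≠ 0 := by
  by_cases hc : ∃ c, omegaJ n k u c ≠ 0 ∨ omegaJ n k v c ≠ 0
  · obtain ⟨c, hc⟩ := hc
    exact exists_isSymplectic_omegaJ_ne_zero_of_block_ne_zero h2 hi hk hc
  · push Not at hc
    obtain ⟨δ, hδ, omegaJ_δ, c, hc⟩ := exists_isSymplectic_omegaJ_eq_and_block_ne_zero hi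
      (fun c => (hc c).1) (fun c => (hc c).2)
    obtain ⟨γ, hγ, hγk, hγj⟩ := exists_isSymplectic_omegaJ_ne_zero_of_block_ne_zero h2
      (by rwa [omegaJ_δ]) (by rwa [omegaJ_δ]) (.inl hc)
    simp only [omegaJ_δ, mulVec_mulVec, ← Matrix.map_mul] at hγk hγj
    exact ⟨γ * δ, hγ.mul hδ, hγk, hγj⟩

end IntegralSteps

theorem exists_integer_symplectic_all_blocks_nonzero_general [NoZeroDivisors R]
    (h2 : (2 : R) ≠ 0) (u v : Fin (2 * n) → R) (huv : omegaForm n u v ≠ 0) :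
    ∃ γ : Matrix (Fin (2 * n)) (Fin (2 * n)) ℤ, IsSymplectic n γ ∧
      ∀ j, omegaJ n j (γ.map (Int.castRingHom R) *ᵥ u) (γ.map (Int.castRingHom R) *ᵥ v) ≠ 0 := by
  induction hZ : {j | omegaJ n j u v = 0} using WellFoundedLT.induction generalizing u v with
  | ind Z ih =>
    subst hZ
    by_cases hall : ∀ j, omegaJ n j u v ≠ 0
    · exact ⟨1, .one, by simpa using hall⟩
    push Not at hall
    obtain ⟨k, hk⟩ := hall
    obtain ⟨i, -, hi⟩ := Finset.exists_ne_zero_of_sum_ne_zero huv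
    obtain ⟨δ, hδ, hδk, hδj⟩ := exists_isSymplectic_omegaJ_ne_zero h2 hi hk
    have fewer_zeros : {j | omegaJ n j (δ.map (Int.castRingHom R) *ᵥ u)
        (δ.map (Int.castRingHom R) *ᵥ v) = 0} < {j | omegaJ n j u v = 0} :=
      (Set.ssubset_iff_of_subset fun j => not_imp_not.mp (hδj j)).mpr ⟨k, hk, hδk⟩
    obtain ⟨γ, hγ, hγj⟩ := ih _ fewer_zeros _ _ (by rwa [hδ.map (Int.castRingHom R)]) rfl
    simp only [mulVec_mulVec, ← Matrix.map_mul] at hγj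
    exact ⟨γ * δ, hγ.mul hδ, hγj⟩

/-- For `u, v ∈ ℝ^{2n}` with `ω(u,v) > 0` there is `γ ∈ Sp(2n, ℤ)` with
`ω_j(γu, γv) ≠ 0` for every `j = 1, …, n`. -/
theorem exists_integer_symplectic_all_blocks_nonzero (n : ℕ) (hn : 1 ≤ n)
    (u v : Fin (2 * n) → ℝ) (huv : 0 < omegaForm n u v) :
    ∃ γ : Matrix (Fin (2 * n)) (Fin (2 * n)) ℤ,
      IsSymplectic n (γ.map (Int.cast : ℤ → ℝ)) ∧
      ∀ j : Fin n,
        omegaJ n j ((γ.map (Int.cast : ℤ → ℝ)).mulVec u)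
          ((γ.map (Int.cast : ℤ → ℝ)).mulVec v) ≠ 0 := by
  obtain ⟨γ, hγ, hγj⟩ :=
    exists_integer_symplectic_all_blocks_nonzero_general two_ne_zero u v huv.ne'
  exact ⟨γ, hγ.map (Int.castRingHom ℝ), hγj⟩
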